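/- A continuous linear map T between C*-algebras preserves Jordan triple products (i.e., T{a,b,c} = {Ta,Tb,Tc} for all a,b,c) if and only if it preserves cubes, i.e., T(aa*a) = (Ta)(Ta)*(Ta) for all a. -/

import Mathlib

/-- Polarization of the quadratic map `x ↦ x * y * x`. -/
theorem mul_mul_add_mul_mul_swap {R : Type*} [NonUnitalRing R] (x y z : R) :
    x * y * z + z * y * x = (x + z) * y * (x + z) - x * y * x - z * y * z := by
  simp only [add_mul, mul_add]
  abel

/-- Polarization of the cube `x ↦ x * star x * x` over the fourth roots of unity. -/
theorem four_smul_mul_star_mul_self {A : Type*} [Ring A] [StarRing A] [Algebra ℂ A]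
    [StarModule ℂ A] (x y : A) :
    (4 : ℂ) • (x * star y * x) =
      (x + y) * star (x + y) * (x + y) - (x - y) * star (x - y) * (x - y) +
        Complex.I • ((x + Complex.I • y) * star (x + Complex.I • y) * (x + Complex.I • y)) -
        Complex.I • ((x - Complex.I • y) * star (x - Complex.I • y) * (x - Complex.I • y)) := by
  have hI : star Complex.I = -Complex.I := Complex.conj_I
  simp only [star_add, star_sub, star_smul, hI, add_mul, mul_add, sub_mul, mul_sub,
    smul_mul_assoc, mul_smul_comm, smul_add, smul_sub, smul_smul, neg_smul, neg_mul, mul_neg,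
    smul_neg, Complex.I_mul_I, neg_neg, one_smul]
  module

/-- A linear map preserving cubes preserves the quadratic products `x * star y * x`. -/
theorem map_mul_star_mul_self_of_cube {A B : Type*} [Ring A] [StarRing A] [Algebra ℂ A]
    [StarModule ℂ A] [Ring B] [StarRing B] [Algebra ℂ B] [StarModule ℂ B] (T : A →ₗ[ℂ] B)
    (h : ∀ a : A, T (a * star a * a) = T a * star (T a) * T a) (x y : A) :
    T (x * star y * x) = T x * star (T y) * T x := by
  apply smul_right_injective B (show (4 : ℂ) ≠ 0 by norm_num)
  simp only [← map_smul, four_smul_mul_star_mul_self]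
  simp only [map_add, map_sub, map_smul, h]


/-- A continuous linear map between C*-algebras preserves Jordan triple products
`{a,b,c} = (ab*c + cb*a)/2` iff it preserves cubes `a ↦ aa*a`. -/
theorem triple_hom_iff_cube_preserving
    {A B : Type*} [NormedRing A] [StarRing A] [CStarRing A]
    [NormedAlgebra ℂ A] [StarModule ℂ A] [CompleteSpace A]
    [NormedRing B] [StarRing B] [CStarRing B]
    [NormedAlgebra ℂ B] [StarModule ℂ B] [CompleteSpace B]
    (T : A →L[ℂ] B) :
    (∀ a b c : A, T ((1 / 2 : ℂ) • (a * star b * c + c * star b * a)) =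
        (1 / 2 : ℂ) • (T a * star (T b) * T c + T c * star (T b) * T a)) ↔
      (∀ a : A, T (a * star a * a) = T a * star (T a) * T a) := by
  constructor
  · intro h a
    have := h a a a
    simpa only [← two_smul ℂ, smul_smul, one_div, inv_mul_cancel₀ (two_ne_zero' ℂ),
      one_smul] using this
  · intro h a b c
    have key := map_mul_star_mul_self_of_cube (T : A →ₗ[ℂ] B) h
    simp only [ContinuousLinearMap.coe_coe] at key
    rw [map_smul, mul_mul_add_mul_mul_swap, mul_mul_add_mul_mul_swap (T a), map_sub, map_sub,
      key, key, key, map_add]
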